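/- Suppose the graph sequence {𝔾(t)} of the column stochastic matrix sequence {W(t)} is uniformly strongly connected. Let y(t+1) = W(t) y(t), y(0) = 𝟙, and S(t)_{ij} = W(t)_{ij} y_j(t) / y_i(t+1). Then there exist constants C > 0 and μ ∈ [0,1) such that for all i, j ∈ {1,…,n} and all t ≥ 0: | [S(t)⋯S(1)S(0)]_{ij} − 1/n | ≤ C μ^t; i.e., S(t)⋯S(1)S(0) converges to (1/n) 𝟙𝟙ᵀ exponentially fast as t → ∞. -/

import Mathlib

open Filter Finset

/-- `matProd M τ k = M (τ+k-1) * ⋯ * M (τ+1) * M τ` (the product of `k` factors),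
i.e. the state-transition matrix `Φ_M (τ+k, τ)`. -/
def matProd {n : ℕ} (M : ℕ → Matrix (Fin n) (Fin n) ℝ) (τ : ℕ) : ℕ → Matrix (Fin n) (Fin n) ℝ
  | 0 => 1
  | k + 1 => M (τ + k) * matProd M τ k

/-!
Column stochasticity of `W` makes `y t / ∑ l, y t l` an absolute probability sequence of the row
stochastic matrices `S`: `(y (t + 1))ᵀ * S t = (y t)ᵀ`. A block of `S` is the corresponding block
of `W` rescaled by `y`. Connectivity and the self-loops make every block of `W` of length `n * L`
entrywise at least `β ^ (n * L)`, so the rescaled block dominates `β ^ (n * L)` times the rank-one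
matrix whose rows are all the absolute probability vector (a Doeblin condition). Each column of a
product of `S`, once its weighted mean is subtracted, therefore shrinks in the sup norm by the
factor `1 - β ^ (n * L)` over each such block.
-/

open Matrix

section EntrywiseProducts

variable {ι K : Type*} [Fintype ι] [Semiring K] [PartialOrder K] {A B : Matrix ι ι K}
  {i j l : ι}

lemma exists_pos_of_matrix_mul_apply_pos (hA : ∀ i j, 0 ≤ A i j) (hB : ∀ i j, 0 ≤ B i j)
    (h : 0 < (A * B) i j) : ∃ l, 0 < A i l ∧ 0 < B l j := by
  obtain ⟨l, -, hl⟩ := exists_ne_zero_of_sum_ne_zero (Matrix.mul_apply (M := A) ▸ h.ne')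
  exact ⟨l, (hA i l).lt_of_ne' (left_ne_zero_of_mul hl),
    (hB l j).lt_of_ne' (right_ne_zero_of_mul hl)⟩

variable [IsStrictOrderedRing K]

lemma mul_apply_le_matrix_mul_apply (hA : ∀ i j, 0 ≤ A i j) (hB : ∀ i j, 0 ≤ B i j) :
    A i l * B l j ≤ (A * B) i j := by
  rw [Matrix.mul_apply]
  exact single_le_sum (f := fun l => A i l * B l j) (fun l _ => mul_nonneg (hA i l) (hB l j))
    (mem_univ l)

lemma matrix_mul_apply_pos (hA : ∀ i j, 0 ≤ A i j) (hB : ∀ i j, 0 ≤ B i j)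
    (hil : 0 < A i l) (hlj : 0 < B l j) : 0 < (A * B) i j :=
  (mul_pos hil hlj).trans_le (mul_apply_le_matrix_mul_apply hA hB)

lemma mulVec_apply_pos_of_diag_pos {u : ι → K} (hA : ∀ i j, 0 ≤ A i j) (hdiag : ∀ i, 0 < A i i)
    (hu : ∀ i, 0 < u i) (i : ι) : 0 < (A *ᵥ u) i :=
  sum_pos' (fun j _ => mul_nonneg (hA i j) (hu j).le) ⟨i, mem_univ i, mul_pos (hdiag i) (hu i)⟩

end EntrywiseProducts

section StateTransition

variable {n : ℕ} {M : ℕ → Matrix (Fin n) (Fin n) ℝ}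

lemma matProd_add (τ a k : ℕ) : matProd M τ (a + k) = matProd M (τ + a) k * matProd M τ a := by
  induction k with
  | zero => simp [matProd]
  | succ k ih => rw [← add_assoc, matProd, ih, matProd, Matrix.mul_assoc, add_assoc]

lemma matProd_mem {P : Submonoid (Matrix (Fin n) (Fin n) ℝ)} (hM : ∀ t, M t ∈ P) (τ k : ℕ) :
    matProd M τ k ∈ P := by
  induction k with
  | zero => exact P.one_mem
  | succ k ih => exact P.mul_mem (hM (τ + k)) ih

lemma matProd_nonneg (hM : ∀ t i j, 0 ≤ M t i j) (τ k : ℕ) (i j : Fin n) :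
    0 ≤ matProd M τ k i j := by
  induction k generalizing i with
  | zero =>
    rw [matProd, Matrix.one_apply]
    split_ifs <;> norm_num
  | succ k ih =>
    rw [matProd, Matrix.mul_apply]
    exact sum_nonneg fun l _ => mul_nonneg (hM (τ + k) i l) (ih l)

lemma matProd_mulVec {y : ℕ → Fin n → ℝ} (hy : ∀ t, y (t + 1) = M t *ᵥ y t) (τ k : ℕ) :
    matProd M τ k *ᵥ y τ = y (τ + k) := by
  induction k with
  | zero => simp [matProd]
  | succ k ih => rw [matProd, ← mulVec_mulVec, ih, ← hy, add_assoc]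

lemma vecMul_matProd {p : ℕ → Fin n → ℝ} (hp : ∀ t, p (t + 1) ᵥ* M t = p t) (τ k : ℕ) :
    p (τ + k) ᵥ* matProd M τ k = p τ := by
  induction k with
  | zero => simp [matProd]
  | succ k ih => rw [matProd, ← vecMul_vecMul, ← add_assoc, hp, ih]

lemma pow_le_matProd_apply_of_pos {β : ℝ} (hM : ∀ t i j, 0 ≤ M t i j) (hβ : 0 ≤ β)
    (hMβ : ∀ t i j, 0 < M t i j → β ≤ M t i j) {τ k : ℕ} {i j : Fin n}
    (hpos : 0 < matProd M τ k i j) : β ^ k ≤ matProd M τ k i j := by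
  induction k generalizing i with
  | zero =>
    obtain rfl : i = j := by
      by_contra hij
      simp [matProd, hij] at hpos
    simp [matProd]
  | succ k ih =>
    obtain ⟨l, hil, hlj⟩ :=
      exists_pos_of_matrix_mul_apply_pos (hM (τ + k)) (matProd_nonneg hM τ k) hpos
    calc β ^ (k + 1) = β * β ^ k := pow_succ' β k
      _ ≤ M (τ + k) i l * matProd M τ k l j :=
        mul_le_mul (hMβ _ _ _ hil) (ih hlj) (pow_nonneg hβ k) hil.le
      _ ≤ matProd M τ (k + 1) i j :=
        mul_apply_le_matrix_mul_apply (hM (τ + k)) (matProd_nonneg hM τ k)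

end StateTransition

section Connectivity

lemma apply_card_eq_univ_of_monotone_of_ne_succ {α : Type*} [Fintype α] {R : ℕ → Finset α}
    (hmono : Monotone R) (hne : ∀ k, R k ≠ univ → R k ≠ R (k + 1)) :
    R (Fintype.card α) = univ := by
  by_contra hR
  have hcard : ∀ k ≤ Fintype.card α, k ≤ #(R k) := by
    intro k hk
    induction k with
    | zero => exact Nat.zero_le _
    | succ k ih =>
      have hk_ne : R k ≠ univ := fun h =>
        hR (univ_subset_iff.1 (h ▸ hmono (Nat.le_of_succ_le hk)))
      exact (ih (Nat.le_of_succ_le hk)).trans_lt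
        (card_lt_card ((hmono k.le_succ).ssubset_of_ne (hne k hk_ne)))
  exact hR ((card_eq_iff_eq_univ _).1 (le_antisymm (card_le_univ _) (hcard _ le_rfl)))

variable {n : ℕ} {W : ℕ → Matrix (Fin n) (Fin n) ℝ} {L : ℕ}

/-- Uniform strong connectivity, with window length `L`, of the graphs of the matrices `W t`, where
a positive entry `W t v u` is an arc from `u` to `v`. -/
def UniformlyStronglyConnected (W : ℕ → Matrix (Fin n) (Fin n) ℝ) (L : ℕ) : Prop :=
  ∀ t : ℕ, ∀ i j : Fin n,
    Relation.TransGen (fun u v : Fin n => ∃ k ∈ Ico t (t + L), 0 < W k v u) i j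

/-- The vertices that information present at the vertex `j` at time `τ` has reached at time
`τ + k`. It is encoded as the support of a column of the state-transition matrix. -/
noncomputable def influenceSet (W : ℕ → Matrix (Fin n) (Fin n) ℝ) (τ : ℕ) (j : Fin n) (k : ℕ) :
    Finset (Fin n) :=
  {i | 0 < matProd W τ k i j}

lemma mem_influenceSet {τ k : ℕ} {i j : Fin n} :
    i ∈ influenceSet W τ j k ↔ 0 < matProd W τ k i j := by
  simp [influenceSet]

lemma mem_influenceSet_succ (hW : ∀ t i j, 0 ≤ W t i j) {τ k : ℕ} {j u v : Fin n}
    (huv : 0 < W (τ + k) v u) (hu : u ∈ influenceSet W τ j k) :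
    v ∈ influenceSet W τ j (k + 1) :=
  mem_influenceSet.2
    (matrix_mul_apply_pos (hW (τ + k)) (matProd_nonneg hW τ k) huv (mem_influenceSet.1 hu))

lemma influenceSet_mono (hW : ∀ t i j, 0 ≤ W t i j) (hdiag : ∀ t i, 0 < W t i i) (τ : ℕ)
    (j : Fin n) : Monotone (influenceSet W τ j) :=
  monotone_nat_of_le_succ fun _ i => mem_influenceSet_succ hW (hdiag _ i)

lemma self_mem_influenceSet (hW : ∀ t i j, 0 ≤ W t i j) (hdiag : ∀ t i, 0 < W t i i) (τ : ℕ)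
    (j : Fin n) (k : ℕ) : j ∈ influenceSet W τ j k :=
  influenceSet_mono hW hdiag τ j (Nat.zero_le k) (mem_influenceSet.2 (by simp [matProd]))

lemma influenceSet_eq_univ_of_eq_add (hW : ∀ t i j, 0 ≤ W t i j) (hdiag : ∀ t i, 0 < W t i i)
    (hconn : UniformlyStronglyConnected W L) {τ k : ℕ} {j : Fin n}
    (hstat : influenceSet W τ j k = influenceSet W τ j (k + L)) :
    influenceSet W τ j k = univ := by
  have hmono := influenceSet_mono hW hdiag τ j
  have arc_closed : ∀ u v, (∃ s ∈ Ico (τ + k) (τ + k + L), 0 < W s v u) →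
      v ∉ influenceSet W τ j k → u ∉ influenceSet W τ j k := by
    rintro u v ⟨s, hs, huv⟩ hv hu
    obtain ⟨hs_ge, hs_lt⟩ := mem_Ico.1 hs
    obtain ⟨l, rfl⟩ := Nat.exists_eq_add_of_le hs_ge
    have hv_reached : v ∈ influenceSet W τ j (k + l + 1) :=
      mem_influenceSet_succ hW (by rwa [← add_assoc]) (hmono (Nat.le_add_right k l) hu)
    exact hv (hstat ▸ hmono (by lia) hv_reached)
  by_contra hne
  obtain ⟨v, hv⟩ := not_forall.1 (mt eq_univ_iff_forall.2 hne)
  exact (hconn (τ + k) j v).closed' (P := (· ∉ influenceSet W τ j k)) (arc_closed _ _) hv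
    (self_mem_influenceSet hW hdiag τ j k)

theorem matProd_apply_pos (hW : ∀ t i j, 0 ≤ W t i j) (hdiag : ∀ t i, 0 < W t i i)
    (hconn : UniformlyStronglyConnected W L) (τ : ℕ) (i j : Fin n) :
    0 < matProd W τ (n * L) i j := by
  have hreach : influenceSet W τ j (Fintype.card (Fin n) * L) = univ :=
    apply_card_eq_univ_of_monotone_of_ne_succ (R := fun m => influenceSet W τ j (m * L))
      (fun _ _ h => influenceSet_mono hW hdiag τ j (Nat.mul_le_mul_right L h))
      fun m hne hstat => hne <| influenceSet_eq_univ_of_eq_add hW hdiag hconn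
        (hstat.trans (by rw [Nat.succ_mul]))
  rw [Fintype.card_fin] at hreach
  exact mem_influenceSet.1 (hreach ▸ mem_univ i)

end Connectivity

section Contraction

lemma abs_dotProduct_le_sum_sub_sum_mul {ι K : Type*} [Fintype ι] [CommRing K] [LinearOrder K]
    [IsStrictOrderedRing K] {q r x : ι → K} {B : K} (hrq : r ≤ q) (hrx : r ⬝ᵥ x = 0)
    (hx : ∀ j, |x j| ≤ B) : |q ⬝ᵥ x| ≤ (∑ j, q j - ∑ j, r j) * B := by
  calc |q ⬝ᵥ x| = |∑ j, (q j - r j) * x j| := by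
        rw [← sub_zero (q ⬝ᵥ x), ← hrx, ← sub_dotProduct]; rfl
    _ ≤ ∑ j, |(q j - r j) * x j| := abs_sum_le_sum_abs _ _
    _ ≤ ∑ j, (q j - r j) * B := by
        gcongr with j
        rw [abs_mul, abs_of_nonneg (sub_nonneg.2 (hrq j))]
        exact mul_le_mul_of_nonneg_left (hx j) (sub_nonneg.2 (hrq j))
    _ = (∑ j, q j - ∑ j, r j) * B := by rw [← sum_mul, sum_sub_distrib]

variable {n : ℕ} {S : ℕ → Matrix (Fin n) (Fin n) ℝ} {p : ℕ → Fin n → ℝ}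

/-- An absolute probability sequence, in the sense of Kolmogorov, of a sequence of row stochastic
matrices: probability vectors that the matrices carry backwards in time. -/
structure IsAbsoluteProbabilitySequence (S : ℕ → Matrix (Fin n) (Fin n) ℝ) (p : ℕ → Fin n → ℝ) :
    Prop where
  mem_stdSimplex : ∀ t, p t ∈ stdSimplex ℝ (Fin n)
  vecMul_eq : ∀ t, p (t + 1) ᵥ* S t = p t

lemma IsAbsoluteProbabilitySequence.dotProduct_matProd_sub_eq_zero
    (hp : IsAbsoluteProbabilitySequence S p) (τ k : ℕ) (j : Fin n) :
    p (τ + k) ⬝ᵥ (fun i => matProd S τ k i j - p τ j) = 0 := by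
  have hcol : p (τ + k) ⬝ᵥ (fun i => matProd S τ k i j) = p τ j :=
    congrFun (vecMul_matProd hp.vecMul_eq τ k) j
  have hsum : ∑ i, p (τ + k) i = 1 := (hp.mem_stdSimplex (τ + k)).2
  simp only [dotProduct] at hcol ⊢
  simp only [mul_sub, sum_sub_distrib, ← sum_mul, hcol, hsum, one_mul, sub_self]

theorem IsAbsoluteProbabilitySequence.abs_matProd_sub_le_pow
    (hp : IsAbsoluteProbabilitySequence S p) (hS : ∀ t, S t ∈ rowStochastic ℝ (Fin n))
    {δ : ℝ} {T : ℕ} (hδ : ∀ t i j, δ * p t j ≤ matProd S t T i j) (τ r m : ℕ) (i j : Fin n) :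
    |matProd S τ (r + m * T) i j - p τ j| ≤ (1 - δ) ^ m := by
  have hstoch := matProd_mem hS
  induction m generalizing i with
  | zero =>
    have hp_mem := mem_Icc_of_mem_stdSimplex (hp.mem_stdSimplex τ) j
    simpa using abs_sub_le_of_le_of_le (nonneg_of_mem_rowStochastic (hstoch τ _))
      (le_one_of_mem_rowStochastic (hstoch τ _)) hp_mem.1 hp_mem.2
  | succ m ih =>
    set k := r + m * T
    set x : Fin n → ℝ := fun l => matProd S τ k l j - p τ j
    have hrow : ∑ l, matProd S (τ + k) T i l = 1 := sum_row_of_mem_rowStochastic (hstoch _ T) i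
    have hsum : ∑ l, p (τ + k) l = 1 := (hp.mem_stdSimplex (τ + k)).2
    have hstep : matProd S τ (k + T) i j - p τ j = matProd S (τ + k) T i ⬝ᵥ x := by
      simp only [x, dotProduct, mul_sub, sum_sub_distrib, ← sum_mul, hrow, one_mul, matProd_add,
        Matrix.mul_apply]
    have hcontract := abs_dotProduct_le_sum_sub_sum_mul (r := δ • p (τ + k)) (hδ (τ + k) i)
      (by rw [smul_dotProduct, hp.dotProduct_matProd_sub_eq_zero, smul_zero]) ih
    rw [Nat.succ_mul, ← add_assoc, hstep, pow_succ']
    simpa only [Pi.smul_apply, smul_eq_mul, ← mul_sum, hrow, hsum, mul_one] using hcontract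

lemma exists_pow_div_le_geometric {q : ℝ} (hq0 : 0 ≤ q) (hq1 : q < 1) {T : ℕ} (hT : 0 < T) :
    ∃ C : ℝ, 0 < C ∧ ∃ μ : ℝ, 0 ≤ μ ∧ μ < 1 ∧ ∀ k : ℕ, q ^ (k / T) ≤ C * μ ^ k := by
  obtain ⟨r, hqr, hr1⟩ := exists_between hq1
  have hr0 : 0 < r := hq0.trans_lt hqr
  set μ : ℝ := r ^ (T⁻¹ : ℝ)
  have hμ0 : 0 ≤ μ := Real.rpow_nonneg hr0.le _
  have hμ1 : μ < 1 := Real.rpow_lt_one hr0.le hr1 (by positivity)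
  have hμT : μ ^ T = r := Real.rpow_inv_natCast_pow hr0.le hT.ne'
  refine ⟨r⁻¹, inv_pos.2 hr0, μ, hμ0, hμ1, fun k => ?_⟩
  rw [inv_mul_eq_div, le_div_iff₀ hr0]
  calc q ^ (k / T) * r ≤ r ^ (k / T) * r := by gcongr
    _ = μ ^ (T * (k / T + 1)) := by rw [← pow_succ, pow_mul, hμT]
    _ ≤ μ ^ k := pow_le_pow_of_le_one hμ0 hμ1.le (Nat.lt_mul_div_succ k hT).le

theorem IsAbsoluteProbabilitySequence.exists_abs_matProd_sub_le_geometric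
    (hp : IsAbsoluteProbabilitySequence S p) (hS : ∀ t, S t ∈ rowStochastic ℝ (Fin n))
    {δ : ℝ} (hδ0 : 0 < δ) (hδ1 : δ ≤ 1) {T : ℕ} (hT : 0 < T)
    (hδ : ∀ t i j, δ * p t j ≤ matProd S t T i j) :
    ∃ C : ℝ, 0 < C ∧ ∃ μ : ℝ, 0 ≤ μ ∧ μ < 1 ∧
      ∀ τ k : ℕ, ∀ i j : Fin n, |matProd S τ k i j - p τ j| ≤ C * μ ^ k := by
  obtain ⟨C, hC, μ, hμ0, hμ1, hgeom⟩ :=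
    exists_pow_div_le_geometric (sub_nonneg.2 hδ1) (sub_lt_self 1 hδ0) hT
  refine ⟨C, hC, μ, hμ0, hμ1, fun τ k i j => ?_⟩
  have hblocks := hp.abs_matProd_sub_le_pow hS hδ τ (k % T) (k / T) i j
  rw [Nat.mod_add_div'] at hblocks
  exact hblocks.trans (hgeom k)

end Contraction

section Rescaling

variable {ι K : Type*} [Field K]

/-- The matrix `diag(v)⁻¹ * A * diag(u)`. The push-sum ratio matrices are
`S t = rescale (W t) (y t) (y (t + 1))`. -/
def rescale (A : Matrix ι ι K) (u v : ι → K) : Matrix ι ι K :=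
  of fun i j => A i j * u j / v i

lemma rescale_one [DecidableEq ι] {u : ι → K} (hu : ∀ i, u i ≠ 0) :
    rescale (1 : Matrix ι ι K) u u = 1 := by
  ext i j
  rcases eq_or_ne i j with rfl | hij
  · simp [rescale, hu i]
  · simp [rescale, hij]

lemma rescale_mul_rescale [Fintype ι] {A B : Matrix ι ι K} {u v w : ι → K} (hv : ∀ i, v i ≠ 0) :
    rescale B v w * rescale A u v = rescale (B * A) u w := by
  ext i j
  simp only [rescale, of_apply, Matrix.mul_apply, sum_mul, sum_div]
  refine sum_congr rfl fun l _ => ?_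
  have := hv l
  field_simp

lemma vecMul_rescale [Fintype ι] {A : Matrix ι ι K} {u v : ι → K} (hA : ∀ j, ∑ i, A i j = 1)
    (hv : ∀ i, v i ≠ 0) : v ᵥ* rescale A u v = u := by
  ext j
  simp only [vecMul, dotProduct, rescale, of_apply, mul_div_cancel₀ _ (hv _), ← sum_mul, hA,
    one_mul]

variable [LinearOrder K] [IsStrictOrderedRing K] {A : Matrix ι ι K} {u v : ι → K}

lemma rescale_mem_rowStochastic [Fintype ι] [DecidableEq ι] (hA : ∀ i j, 0 ≤ A i j)
    (hu : ∀ i, 0 ≤ u i) (hAu : ∀ i, 0 < (A *ᵥ u) i) :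
    rescale A u (A *ᵥ u) ∈ rowStochastic K ι := by
  refine mem_rowStochastic_iff_sum.2
    ⟨fun i j => div_nonneg (mul_nonneg (hA i j) (hu j)) (hAu i).le, fun i => ?_⟩
  simp only [rescale, of_apply, ← sum_div]
  exact div_self (hAu i).ne'

lemma mul_div_le_rescale_apply {a s : K} {i j : ι} (ha : 0 ≤ a) (hA : a ≤ A i j) (hu : 0 ≤ u j)
    (hv : 0 < v i) (hvs : v i ≤ s) : a * (u j / s) ≤ rescale A u v i j := by
  rw [← mul_div_assoc, rescale, of_apply]
  gcongr
  exact mul_nonneg (ha.trans hA) hu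

end Rescaling

section PushSum

variable {n : ℕ} {W S : ℕ → Matrix (Fin n) (Fin n) ℝ} {y : ℕ → Fin n → ℝ}

lemma matProd_rescale (hypos : ∀ t i, 0 < y t i)
    (hS : ∀ t, S t = rescale (W t) (y t) (y (t + 1))) (τ k : ℕ) :
    matProd S τ k = rescale (matProd W τ k) (y τ) (y (τ + k)) := by
  induction k with
  | zero => exact (rescale_one fun i => (hypos τ i).ne').symm
  | succ k ih =>
    rw [matProd, ih, hS, rescale_mul_rescale fun i => (hypos (τ + k) i).ne', matProd, add_assoc]

lemma isAbsoluteProbabilitySequence_rescale [NeZero n]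
    (hW : ∀ t, W t ∈ colStochastic ℝ (Fin n)) (hypos : ∀ t i, 0 < y t i)
    (hy : ∀ t, y (t + 1) = W t *ᵥ y t) (hS : ∀ t, S t = rescale (W t) (y t) (y (t + 1))) :
    IsAbsoluteProbabilitySequence S fun t => (∑ l, y t l)⁻¹ • y t where
  mem_stdSimplex t := by
    have hsum : 0 < ∑ l, y t l := sum_pos (fun l _ => hypos t l) univ_nonempty
    refine ⟨fun i => mul_nonneg (inv_pos.2 hsum).le (hypos t i).le, ?_⟩
    simp only [Pi.smul_apply, smul_eq_mul, ← mul_sum, inv_mul_cancel₀ hsum.ne']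
  vecMul_eq t := by
    have hsum : ∑ l, y (t + 1) l = ∑ l, y t l := by rw [hy, sum_mulVec_of_mem_colStochastic (hW t)]
    rw [smul_vecMul, hsum, hS,
      vecMul_rescale (sum_col_of_mem_colStochastic (hW t)) fun i => (hypos (t + 1) i).ne']

lemma mul_le_matProd_rescale_apply (hW : ∀ t, W t ∈ colStochastic ℝ (Fin n))
    (hypos : ∀ t i, 0 < y t i) (hy : ∀ t, y (t + 1) = W t *ᵥ y t)
    (hS : ∀ t, S t = rescale (W t) (y t) (y (t + 1))) {a : ℝ} (ha : 0 ≤ a) {τ k : ℕ} {i j : Fin n}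
    (hWa : a ≤ matProd W τ k i j) :
    a * ((∑ l, y τ l)⁻¹ • y τ) j ≤ matProd S τ k i j := by
  have hle : y (τ + k) i ≤ ∑ l, y τ l := by
    rw [← sum_mulVec_of_mem_colStochastic (matProd_mem hW τ k), matProd_mulVec hy]
    exact single_le_sum (fun l _ => (hypos (τ + k) l).le) (mem_univ i)
  rw [matProd_rescale hypos hS, Pi.smul_apply, smul_eq_mul, inv_mul_eq_div]
  exact mul_div_le_rescale_apply ha hWa (hypos τ j).le (hypos _ i) hle

end PushSum

theorem stmt_13_general
    (n : ℕ) (hn : 0 < n)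
    (W : ℕ → Matrix (Fin n) (Fin n) ℝ)
    (hWnonneg : ∀ t i j, 0 ≤ W t i j)
    (hWcol : ∀ t j, ∑ i, W t i j = 1)
    (hWdiag : ∀ t i, 0 < W t i i)
    (β : ℝ) (hβ : 0 < β)
    (hWβ : ∀ t i j, 0 < W t i j → β ≤ W t i j)
    (L : ℕ) (hL : 0 < L)
    (hUSC : UniformlyStronglyConnected W L)
    (y : ℕ → Fin n → ℝ)
    (hy0 : ∀ i, 0 < y 0 i)
    (hyrec : ∀ t i, y (t + 1) i = ∑ j, W t i j * y t j)
    (S : ℕ → Matrix (Fin n) (Fin n) ℝ)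
    (hS : ∀ t i j, S t i j = W t i j * y t j / y (t + 1) i) :
    ∃ C : ℝ, 0 < C ∧ ∃ μ : ℝ, 0 ≤ μ ∧ μ < 1 ∧
      ∀ τ k : ℕ, ∀ i j : Fin n,
        |matProd S τ k i j - y τ j / ∑ l, y τ l| ≤ C * μ ^ k := by
  have : NeZero n := ⟨hn.ne'⟩
  have hW : ∀ t, W t ∈ colStochastic ℝ (Fin n) := fun t =>
    mem_colStochastic_iff_sum.2 ⟨hWnonneg t, hWcol t⟩
  have hy : ∀ t, y (t + 1) = W t *ᵥ y t := fun t => funext (hyrec t)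
  have hSy : ∀ t, S t = rescale (W t) (y t) (y (t + 1)) := fun t => Matrix.ext (hS t)
  have hypos : ∀ t i, 0 < y t i := by
    intro t
    induction t with
    | zero => exact hy0
    | succ t ih => exact hy t ▸ mulVec_apply_pos_of_diag_pos (hWnonneg t) (hWdiag t) ih
  have hSstoch : ∀ t, S t ∈ rowStochastic ℝ (Fin n) := fun t => by
    rw [hSy, hy]
    exact rescale_mem_rowStochastic (hWnonneg t) (fun i => (hypos t i).le) (hy t ▸ hypos (t + 1))
  have hβ1 : β ≤ 1 := (hWβ 0 0 0 (hWdiag 0 0)).trans (le_one_of_mem_colStochastic (hW 0))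
  have hblock : ∀ τ i j, β ^ (n * L) ≤ matProd W τ (n * L) i j := fun τ i j =>
    pow_le_matProd_apply_of_pos hWnonneg hβ.le hWβ (matProd_apply_pos hWnonneg hWdiag hUSC τ i j)
  simpa only [Pi.smul_apply, smul_eq_mul, inv_mul_eq_div] using
    (isAbsoluteProbabilitySequence_rescale hW hypos hy hSy).exists_abs_matProd_sub_le_geometric
      hSstoch (pow_pos hβ _) (pow_le_one₀ hβ.le hβ1) (Nat.mul_pos hn hL) fun τ i j =>
        mul_le_matProd_rescale_apply hW hypos hy hSy (pow_pos hβ _).le (hblock τ i j)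

theorem stmt_13
    (n : ℕ) (hn : 0 < n)
    (W : ℕ → Matrix (Fin n) (Fin n) ℝ)
    (hWnonneg : ∀ t i j, 0 ≤ W t i j)
    (hWcol : ∀ t j, ∑ i, W t i j = 1)
    (hWdiag : ∀ t i, 0 < W t i i)
    (β : ℝ) (hβ : 0 < β)
    (hWβ : ∀ t i j, 0 < W t i j → β ≤ W t i j)
    (L : ℕ) (hL : 0 < L)
    (hUSC : ∀ t : ℕ, ∀ i j : Fin n,
      Relation.TransGen (fun u v : Fin n => ∃ k ∈ Finset.Ico t (t + L), 0 < W k v u) i j)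
    (y : ℕ → Fin n → ℝ)
    (hy0 : ∀ i, y 0 i = 1)
    (hyrec : ∀ t i, y (t + 1) i = ∑ j, W t i j * y t j)
    (S : ℕ → Matrix (Fin n) (Fin n) ℝ)
    (hS : ∀ t i j, S t i j = W t i j * y t j / y (t + 1) i)
    :
    ∃ C : ℝ, 0 < C ∧ ∃ μ : ℝ, 0 ≤ μ ∧ μ < 1 ∧
      ∀ t : ℕ, ∀ i j : Fin n,
        |matProd S 0 (t + 1) i j - 1 / n| ≤ C * μ ^ t := by
  obtain ⟨C, hC, μ, hμ0, hμ1, hbound⟩ := stmt_13_general n hn W hWnonneg hWcol hWdiag β hβ hWβ L hL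
    hUSC y (fun i => hy0 i ▸ one_pos) hyrec S hS
  refine ⟨C, hC, μ, hμ0, hμ1, fun t i j => ?_⟩
  calc |matProd S 0 (t + 1) i j - 1 / n| ≤ C * μ ^ (t + 1) := by
        simpa [hy0] using hbound 0 (t + 1) i j
    _ ≤ C * μ ^ t :=
        mul_le_mul_of_nonneg_left (pow_le_pow_of_le_one hμ0 hμ1.le t.le_succ) hC.le
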